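/- Let 𝓛 be a second-order elliptic operator on ℝ^d satisfying the standing assumptions, and suppose the constant function 1 is a ground state of 𝓛 in ℝ^d. Let V be a bounded, locally Hölder continuous potential with V ≤ 0 on ℝ^d. Then every bounded C² function u on ℝ^d satisfying 𝓛u + Vu = 0 is constant. -/

import Mathlib

open Metric Set Filter

noncomputable section

/-- `ℝ^d` as a Euclidean space. -/
abbrev Euc (d : ℕ) := EuclideanSpace ℝ (Fin d)

/-- First partial derivative `∂u/∂xᵢ`. -/
def pd {d : ℕ} (u : Euc d → ℝ) (i : Fin d) (x : Euc d) : ℝ :=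
  fderiv ℝ u x (EuclideanSpace.single i 1)

/-- Second partial derivative `∂²u/∂xᵢ∂xⱼ`. -/
def pd2 {d : ℕ} (u : Euc d → ℝ) (i j : Fin d) (x : Euc d) : ℝ :=
  fderiv ℝ (fun y => pd u j y) x (EuclideanSpace.single i 1)

/-- The second-order operator `𝓛u = Σ aᶦʲ ∂ᵢⱼu + Σ bᶦ ∂ᵢu`. -/
def Lop {d : ℕ} (a : Euc d → Matrix (Fin d) (Fin d) ℝ) (b : Euc d → Euc d)
    (u : Euc d → ℝ) (x : Euc d) : ℝ :=
  (∑ i, ∑ j, a x i j * pd2 u i j x) + ∑ i, b x i * pd u i x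

/-- Frobenius norm of a matrix. -/
def frob {d : ℕ} (m : Matrix (Fin d) (Fin d) ℝ) : ℝ :=
  Real.sqrt (∑ i, ∑ j, (m i j) ^ 2)

/-- The quadratic form `⟨ξ, m ξ⟩`. -/
def quadForm {d : ℕ} (m : Matrix (Fin d) (Fin d) ℝ) (ξ : Euc d) : ℝ :=
  ∑ i, ∑ j, m i j * ξ i * ξ j

/-- Local Hölder continuity on a set. -/
def LocallyHolderOn {E F : Type*} [PseudoMetricSpace E] [PseudoMetricSpace F]
    (f : E → F) (s : Set E) : Prop :=
  ∀ x ∈ s, ∃ (C r : NNReal), 0 < r ∧ r ≤ 1 ∧ ∃ ε > 0, HolderOnWith C r f (Metric.ball x ε ∩ s)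

/-- Local Hölder continuity. -/
def LocallyHolder {E F : Type*} [PseudoMetricSpace E] [PseudoMetricSpace F] (f : E → F) : Prop :=
  LocallyHolderOn f Set.univ

/-- The set of `λ ∈ ℝ` admitting a positive C² supersolution of `𝓛φ + Vφ ≤ λφ` on `D`. -/
def supersolutions {d : ℕ} (a : Euc d → Matrix (Fin d) (Fin d) ℝ) (b : Euc d → Euc d)
    (V : Euc d → ℝ) (D : Set (Euc d)) : Set ℝ :=
  {lam | ∃ φ : Euc d → ℝ, (∀ x ∈ D, 0 < φ x) ∧ ContDiffOn ℝ 2 φ D ∧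
    ∀ x ∈ D, Lop a b φ x + V x * φ x ≤ lam * φ x}

/-- The generalized principal eigenvalue `λ*(𝓛,V)` on `D`. -/
def lamStar {d : ℕ} (a : Euc d → Matrix (Fin d) (Fin d) ℝ) (b : Euc d → Euc d)
    (V : Euc d → ℝ) (D : Set (Euc d)) : ℝ :=
  sInf (supersolutions a b V D)

/-- `λ*(𝓛,V)` is finite: the defining set is nonempty and bounded below. -/
def lamStarFinite {d : ℕ} (a : Euc d → Matrix (Fin d) (Fin d) ℝ) (b : Euc d → Euc d)
    (V : Euc d → ℝ) (D : Set (Euc d)) : Prop :=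
  (supersolutions a b V D).Nonempty ∧ BddBelow (supersolutions a b V D)

/-- A ground state of `𝓛 + W` in the open connected set `D`: a positive C² solution of
minimal growth at infinity. -/
def IsGroundState {d : ℕ} (a : Euc d → Matrix (Fin d) (Fin d) ℝ) (b : Euc d → Euc d)
    (W : Euc d → ℝ) (u : Euc d → ℝ) (D : Set (Euc d)) : Prop :=
  (∀ x ∈ D, 0 < u x) ∧ ContDiffOn ℝ 2 u D ∧ (∀ x ∈ D, Lop a b u x + W x * u x = 0) ∧
  ∀ K : Set (Euc d), IsCompact K → K ⊆ D →
    ∀ v : Euc d → ℝ, ContDiffOn ℝ 2 v (D \ K) → (∀ x ∈ D \ K, 0 < v x) →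
      (∀ x ∈ D \ K, Lop a b v x + W x * v x ≤ 0) →
      ∃ K' : Set (Euc d), IsCompact K' ∧ K ⊆ K' ∧ K' ⊆ D ∧
        ∃ κ > 0, ∀ x ∈ D \ K', κ * u x ≤ v x

/-- Membership in `C₀⁺(ℝ^d)`: continuous, nonnegative, not identically zero, vanishing
at infinity. -/
def C0plus {d : ℕ} (h : Euc d → ℝ) : Prop :=
  Continuous h ∧ (∀ x, 0 ≤ h x) ∧ (∃ x, h x ≠ 0) ∧ Tendsto h (cocompact (Euc d)) (nhds 0)

/-- `λ*` is strictly monotone at `V` on the right. -/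
def StrictMonoRight {d : ℕ} (a : Euc d → Matrix (Fin d) (Fin d) ℝ) (b : Euc d → Euc d)
    (V : Euc d → ℝ) : Prop :=
  ∀ h : Euc d → ℝ, C0plus h →
    lamStar a b V Set.univ < lamStar a b (fun x => V x + h x) Set.univ

/-- `λ*` is strictly monotone at `V` (on both sides). -/
def StrictMonoAt {d : ℕ} (a : Euc d → Matrix (Fin d) (Fin d) ℝ) (b : Euc d → Euc d)
    (V : Euc d → ℝ) : Prop :=
  ∀ h : Euc d → ℝ, C0plus h →
    lamStar a b (fun x => V x - h x) Set.univ < lamStar a b V Set.univ ∧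
    lamStar a b V Set.univ < lamStar a b (fun x => V x + h x) Set.univ

/-- Standing assumptions (A1)–(A3) with `b` Borel measurable and locally bounded. -/
structure StandingB {d : ℕ} (a : Euc d → Matrix (Fin d) (Fin d) ℝ) (b : Euc d → Euc d) : Prop where
  posdef : ∀ x, (a x).PosDef
  aLip : ∀ R > 0, ∃ C > 0, ∀ x y : Euc d, ‖x‖ ≤ R → ‖y‖ ≤ R →
    frob (a x - a y) ≤ C * ‖x - y‖
  bMeas : Measurable b
  bLocBdd : ∀ R > 0, ∃ C, ∀ x : Euc d, ‖x‖ ≤ R → ‖b x‖ ≤ C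
  nondeg : ∀ R > 0, ∃ C > 0, ∀ x : Euc d, ‖x‖ ≤ R → ∀ ξ : Euc d,
    C⁻¹ * ‖ξ‖ ^ 2 ≤ quadForm (a x) ξ
  growth : ∃ C₀ > 0, ∀ x : Euc d,
    max (∑ i, b x i * x i) 0 + frob (a x) ≤ C₀ * (1 + ‖x‖ ^ 2)

/-- Standing assumptions (A1)–(A3) with `b` locally Hölder continuous. -/
structure StandingH {d : ℕ} (a : Euc d → Matrix (Fin d) (Fin d) ℝ) (b : Euc d → Euc d) : Prop where
  posdef : ∀ x, (a x).PosDef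
  aLip : ∀ R > 0, ∃ C > 0, ∀ x y : Euc d, ‖x‖ ≤ R → ‖y‖ ≤ R →
    frob (a x - a y) ≤ C * ‖x - y‖
  bHolder : LocallyHolder b
  nondeg : ∀ R > 0, ∃ C > 0, ∀ x : Euc d, ‖x‖ ≤ R → ∀ ξ : Euc d,
    C⁻¹ * ‖ξ‖ ^ 2 ≤ quadForm (a x) ξ
  growth : ∃ C₀ > 0, ∀ x : Euc d,
    max (∑ i, b x i * x i) 0 + frob (a x) ≤ C₀ * (1 + ‖x‖ ^ 2)

lemma differentiableAt_pd {d : ℕ} {u : Euc d → ℝ} (hu : ContDiff ℝ 2 u) (j : Fin d) (x : Euc d) :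
    DifferentiableAt ℝ (fun y => pd u j y) x := by
  have h1 : ContDiff ℝ 1 (fderiv ℝ u) := hu.fderiv_right (by norm_num)
  exact ((h1.differentiable (by norm_num)) x).clm_apply (differentiableAt_const _)

lemma pd2_eq_fderiv_fderiv {d : ℕ} {u : Euc d → ℝ} (hu : ContDiff ℝ 2 u) (i j : Fin d)
    (x : Euc d) :
    pd2 u i j x = fderiv ℝ (fderiv ℝ u) x (EuclideanSpace.single i 1)
      (EuclideanSpace.single j 1) := by
  have h1 : ContDiff ℝ 1 (fderiv ℝ u) := hu.fderiv_right (by norm_num)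
  have h2 := (h1.differentiable (by norm_num)) x
  have := (h2.hasFDerivAt.clm_apply
    (hasFDerivAt_const (EuclideanSpace.single j (1 : ℝ) : Euc d) x)).fderiv
  unfold pd2 pd
  rw [this]
  simp

/-- At a local maximum of a `C²` function the second directional derivatives are nonpositive. -/
lemma fderiv_fderiv_apply_nonpos_of_isLocalMax {d : ℕ} {f : Euc d → ℝ} (hf : ContDiff ℝ 2 f)
    {x : Euc d} (hx : IsLocalMax f x) (c : Euc d) : fderiv ℝ (fderiv ℝ f) x c c ≤ 0 := by
  by_contra! hpos
  have hd1 : ContDiff ℝ 1 (fderiv ℝ f) := hf.fderiv_right (by norm_num)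
  have hline : ∀ t : ℝ, HasDerivAt (fun t : ℝ => x + t • c) c t := fun t => by
    simpa using ((hasDerivAt_id t).smul_const c).const_add x
  have hg : ∀ t : ℝ, HasDerivAt (fun t : ℝ => f (x + t • c)) (fderiv ℝ f (x + t • c) c) t :=
    fun t => ((hf.differentiable (by norm_num)) _).hasFDerivAt.comp_hasDerivAt t (hline t)
  have hg' : deriv (fun t : ℝ => f (x + t • c)) = fun t => fderiv ℝ f (x + t • c) c :=
    funext fun t => (hg t).deriv
  have hg2 : deriv (deriv fun t : ℝ => f (x + t • c)) 0 = fderiv ℝ (fderiv ℝ f) x c c := by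
    rw [hg']
    have h := ((hd1.differentiable (by norm_num)) (x + (0 : ℝ) • c)).hasFDerivAt.comp_hasDerivAt
      0 (hline 0)
    simpa using (h.clm_apply (hasDerivAt_const (0 : ℝ) c)).deriv
  have hcont : Continuous fun t : ℝ => x + t • c := by fun_prop
  have hmax : IsLocalMax (fun t : ℝ => f (x + t • c)) 0 := by
    have ht : Tendsto (fun t : ℝ => x + t • c) (nhds 0) (nhds x) := by
      simpa using hcont.tendsto 0
    have h : ∀ᶠ y in nhds x, f y ≤ f x := hx
    filter_upwards [ht.eventually h] with t ht
    simpa using ht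
  have hmin : IsLocalMin (fun t : ℝ => f (x + t • c)) 0 :=
    isLocalMin_of_deriv_deriv_pos (by rw [hg2]; exact hpos) hmax.deriv_eq_zero
      (hg 0).continuousAt
  have hconst : (fun t : ℝ => f (x + t • c)) =ᶠ[nhds 0] fun _ => f (x + (0 : ℝ) • c) := by
    filter_upwards [hmax, hmin] with t h1 h2 using le_antisymm h1 h2
  have h0 := hconst.deriv.deriv_eq
  rw [hg2] at h0
  simp at h0
  exact hpos.ne' h0

lemma Lop_nonpos_of_isLocalMax {d : ℕ} {a : Euc d → Matrix (Fin d) (Fin d) ℝ} {b : Euc d → Euc d}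
    {f : Euc d → ℝ} (hf : ContDiff ℝ 2 f) {x : Euc d} (ha : (a x).PosSemidef)
    (hx : IsLocalMax f x) : Lop a b f x ≤ 0 := by
  obtain ⟨m, B, hB⟩ := Matrix.posSemidef_iff_eq_sum_vecMulVec.1 ha
  have hgrad : ∀ i, pd f i x = 0 := fun i => by simp [pd, hx.fderiv_eq_zero]
  have key : ∑ i, ∑ j, a x i j * pd2 f i j x =
      ∑ k, fderiv ℝ (fderiv ℝ f) x (∑ i, B k i • EuclideanSpace.single i (1 : ℝ))
        (∑ i, B k i • EuclideanSpace.single i (1 : ℝ)) := by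
    simp only [map_sum, map_smul, FunLike.coe_sum, Finset.sum_apply, FunLike.coe_smul,
      Pi.smul_apply, smul_eq_mul, pd2_eq_fderiv_fderiv hf, hB, Matrix.sum_apply,
      Matrix.vecMulVec_apply, star_trivial, Finset.sum_mul, Finset.mul_sum]
    rw [Finset.sum_congr rfl fun i _ => Finset.sum_comm, Finset.sum_comm]
    refine Finset.sum_congr rfl fun k _ => ?_
    rw [Finset.sum_comm]
    refine Finset.sum_congr rfl fun i _ => Finset.sum_congr rfl fun j _ => ?_
    ring
  rw [Lop, key]
  simp only [hgrad, mul_zero, Finset.sum_const_zero, add_zero]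
  exact Finset.sum_nonpos fun k _ => fderiv_fderiv_apply_nonpos_of_isLocalMax hf hx _

lemma Lop_const {d : ℕ} (a : Euc d → Matrix (Fin d) (Fin d) ℝ) (b : Euc d → Euc d) (c : ℝ)
    (x : Euc d) : Lop a b (fun _ => c) x = 0 := by
  simp [Lop, pd2, pd]

lemma Lop_add_const_mul {d : ℕ} (a : Euc d → Matrix (Fin d) (Fin d) ℝ) (b : Euc d → Euc d)
    {f g : Euc d → ℝ} (hf : ContDiff ℝ 2 f) (hg : ContDiff ℝ 2 g) (c : ℝ) (x : Euc d) :
    Lop a b (fun y => f y + c * g y) x = Lop a b f x + c * Lop a b g x := by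
  have hpd : ∀ i y, pd (fun y => f y + c * g y) i y = pd f i y + c * pd g i y := fun i y => by
    have h := ((hf.differentiable (by norm_num)) y).hasFDerivAt.add
      (((hg.differentiable (by norm_num)) y).hasFDerivAt.const_mul c)
    have h' := h.fderiv
    simp only [pd]
    erw [h']
    simp
  have hpd2 : ∀ i j, pd2 (fun y => f y + c * g y) i j x = pd2 f i j x + c * pd2 g i j x :=
    fun i j => by
    have h := ((differentiableAt_pd hf j x).hasFDerivAt.add
      ((differentiableAt_pd hg j x).hasFDerivAt.const_mul c)).fderiv
    simp only [pd2, hpd]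
    erw [h]
    simp
  simp only [Lop, hpd, hpd2, mul_add, Finset.sum_add_distrib, Finset.mul_sum]
  simp only [mul_left_comm c]
  ring

/-- Chain rule for the operator: `𝓛(φ ∘ f) = φ''(f) ⟨∇f, a ∇f⟩ + φ'(f) 𝓛f`. -/
lemma Lop_comp {d : ℕ} (a : Euc d → Matrix (Fin d) (Fin d) ℝ) (b : Euc d → Euc d)
    {f : Euc d → ℝ} (hf : ContDiff ℝ 2 f) {φ φ' φ'' : ℝ → ℝ}
    (h1 : ∀ t, HasDerivAt φ (φ' t) t) (h2 : ∀ t, HasDerivAt φ' (φ'' t) t) (x : Euc d) :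
    Lop a b (fun y => φ (f y)) x =
      φ'' (f x) * quadForm (a x) (WithLp.toLp 2 fun i => pd f i x) + φ' (f x) * Lop a b f x := by
  have hfd : ∀ y, HasFDerivAt f (fderiv ℝ f y) y := fun y =>
    ((hf.differentiable (by norm_num)) y).hasFDerivAt
  have hpd : ∀ i y, pd (fun y => φ (f y)) i y = φ' (f y) * pd f i y := fun i y => by
    have h := ((h1 (f y)).comp_hasFDerivAt y (hfd y)).fderiv
    simp only [pd]
    erw [h]
    simp
  have hpd2 : ∀ i j, pd2 (fun y => φ (f y)) i j x =
      φ'' (f x) * (pd f i x * pd f j x) + φ' (f x) * pd2 f i j x := fun i j => by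
    have h := (((h2 (f x)).comp_hasFDerivAt x (hfd x)).mul
      (differentiableAt_pd hf j x).hasFDerivAt).fderiv
    simp only [pd2, hpd]
    erw [h]
    simp [pd]
    ring
  simp only [Lop, quadForm, hpd, hpd2, mul_add, Finset.sum_add_distrib, Finset.mul_sum]
  rw [← add_assoc]
  refine congrArg₂ _ (congrArg₂ _ ?_ ?_) ?_
  · exact Finset.sum_congr rfl fun i _ => Finset.sum_congr rfl fun j _ => by ring
  · exact Finset.sum_congr rfl fun i _ => Finset.sum_congr rfl fun j _ => by ring
  · exact Finset.sum_congr rfl fun i _ => by ring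

lemma continuous_pd {d : ℕ} {u : Euc d → ℝ} (hu : ContDiff ℝ 2 u) (i : Fin d) :
    Continuous (pd u i) :=
  continuous_iff_continuousAt.2 fun x => (differentiableAt_pd hu i x).continuousAt

lemma continuous_Lop {d : ℕ} {a : Euc d → Matrix (Fin d) (Fin d) ℝ} {b : Euc d → Euc d}
    (ha : Continuous a) (hb : Continuous b) {u : Euc d → ℝ} (hu : ContDiff ℝ 2 u) :
    Continuous (Lop a b u) := by
  have h1 : ContDiff ℝ 1 (fderiv ℝ u) := hu.fderiv_right (by norm_num)
  have h2 : Continuous (fderiv ℝ (fderiv ℝ u)) := h1.continuous_fderiv (by norm_num)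
  have hpd2 : ∀ i j, Continuous (pd2 u i j) := fun i j => by
    rw [show pd2 u i j = _ from funext fun x => pd2_eq_fderiv_fderiv hu i j x]
    fun_prop
  have hpd := continuous_pd hu
  unfold Lop
  fun_prop

lemma StandingH.continuous_diffusion {d : ℕ} {a : Euc d → Matrix (Fin d) (Fin d) ℝ}
    {b : Euc d → Euc d} (h : StandingH a b) : Continuous a := by
  refine continuous_matrix fun i j => continuous_iff_continuousAt.2 fun x => ?_
  obtain ⟨C, -, hC⟩ := h.aLip (‖x‖ + 1) (by positivity)
  have hnear : ∀ᶠ y in nhds x, ‖y‖ ≤ ‖x‖ + 1 :=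
    (continuous_norm.tendsto x).eventually_le_const (by linarith)
  refine tendsto_iff_dist_tendsto_zero.2 (squeeze_zero' (Eventually.of_forall fun _ => dist_nonneg)
    (g := fun y => C * ‖y - x‖) ?_ ?_)
  · filter_upwards [hnear] with y hy
    refine le_trans ?_ (hC y x hy (by linarith))
    rw [Real.dist_eq]
    refine Real.abs_le_sqrt ?_
    have h1 : ((a y - a x) i j) ^ 2 ≤ ∑ j', ((a y - a x) i j') ^ 2 :=
      Finset.single_le_sum (f := fun j' => ((a y - a x) i j') ^ 2)
        (fun _ _ => sq_nonneg _) (Finset.mem_univ j)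
    have h2 : ∑ j', ((a y - a x) i j') ^ 2 ≤ ∑ i', ∑ j', ((a y - a x) i' j') ^ 2 :=
      Finset.single_le_sum (f := fun i' => ∑ j', ((a y - a x) i' j') ^ 2)
        (fun _ _ => Finset.sum_nonneg fun _ _ => sq_nonneg _) (Finset.mem_univ i)
    exact h1.trans h2
  · have : Continuous fun y => C * ‖y - x‖ := by fun_prop
    simpa using this.tendsto x

lemma LocallyHolder.continuous {E F : Type*} [PseudoMetricSpace E] [PseudoMetricSpace F]
    {f : E → F} (h : LocallyHolder f) : Continuous f := by
  refine continuous_iff_continuousAt.2 fun x => ?_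
  obtain ⟨C, r, hr, -, ε, hε, hf⟩ := h x (mem_univ x)
  rw [inter_univ] at hf
  exact (hf.continuousOn hr).continuousAt (ball_mem_nhds x hε)

lemma StandingH.quadForm_pos {d : ℕ} {a : Euc d → Matrix (Fin d) (Fin d) ℝ}
    {b : Euc d → Euc d} (h : StandingH a b) (x : Euc d) {ξ : Euc d} (hξ : ξ ≠ 0) :
    0 < quadForm (a x) ξ := by
  obtain ⟨C, hC, hq⟩ := h.nondeg (‖x‖ + 1) (by positivity)
  have hn : 0 < ‖ξ‖ := norm_pos_iff.2 hξ
  exact lt_of_lt_of_le (by positivity) (hq x (by linarith) ξ)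

lemma fderiv_eq_zero_of_pd_eq_zero {d : ℕ} {f : Euc d → ℝ} {x : Euc d}
    (h : ∀ i, pd f i x = 0) : fderiv ℝ f x = 0 := by
  refine ContinuousLinearMap.coe_injective
    ((EuclideanSpace.basisFun (Fin d) ℝ).toBasis.ext fun i => ?_)
  simpa [pd] using h i

/-- Strong maximum principle: a `C²` subsolution of `𝓛` attaining its maximum is constant. -/
lemma StandingH.strong_maximum_principle {d : ℕ} {a : Euc d → Matrix (Fin d) (Fin d) ℝ}
    {b : Euc d → Euc d} (hs : StandingH a b) {w : Euc d → ℝ} (hw : ContDiff ℝ 2 w)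
    (hLw : ∀ x, 0 ≤ Lop a b w x) {M : ℝ} (hM : ∀ x, w x ≤ M) {z : Euc d} (hz : w z = M)
    (p : Euc d) : w p = M := by
  by_contra hp
  have hZ : IsClosed {x | w x = M} := isClosed_eq hw.continuous continuous_const
  -- `x₀` is a point of the contact set nearest to `p`
  obtain ⟨x₀, hx₀, hdist⟩ := hZ.exists_infDist_eq_dist ⟨z, hz⟩ p
  have hnear : ∀ x, w x = M → dist p x₀ ≤ dist p x := fun x hx =>
    hdist ▸ infDist_le_dist_of_mem hx
  have hne : x₀ ≠ p := fun h => hp (h ▸ hx₀)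
  set q : Euc d → ℝ := fun x => ‖x - p‖ ^ 2 + ‖x - x₀‖ ^ 2 with hq
  have hqC : ContDiff ℝ 2 q := by
    have h1 : ContDiff ℝ 2 fun x : Euc d => x - p := contDiff_id.sub contDiff_const
    have h2 : ContDiff ℝ 2 fun x : Euc d => x - x₀ := contDiff_id.sub contDiff_const
    exact (h1.norm_sq ℝ).add (h2.norm_sq ℝ)
  have hq_contact : ∀ x, w x = M → x ≠ x₀ → q x₀ < q x := fun x hx hxx => by
    have h1 := hnear x hx
    rw [dist_comm p, dist_comm p, dist_eq_norm, dist_eq_norm] at h1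
    have h2 : 0 < ‖x - x₀‖ := norm_pos_iff.2 (sub_ne_zero.2 hxx)
    simp only [hq, sub_self, norm_zero]
    nlinarith [norm_nonneg (x₀ - p)]
  have hgrad : (WithLp.toLp 2 fun i => pd q i x₀ : Euc d) ≠ 0 := by
    intro h0
    have hz := fderiv_eq_zero_of_pd_eq_zero (f := q) (x := x₀) fun i => by
      simpa using congrArg (fun v : Euc d => v i) h0
    have h1 := (((hasFDerivAt_id x₀).sub_const p).norm_sq.add
      ((hasFDerivAt_id x₀).sub_const x₀).norm_sq).fderiv
    have h2 := congrArg (fun A : Euc d →L[ℝ] ℝ => A (x₀ - p)) (h1.symm.trans hz)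
    have h3 : x₀ - p = 0 := by
      rw [← inner_self_eq_zero (𝕜 := ℝ), inner_sub_left]
      simpa using h2
    exact hne (sub_eq_zero.1 h3)
  have hQ := hs.quadForm_pos x₀ hgrad
  obtain ⟨α, hα, hαL⟩ : ∃ α : ℝ, 0 < α ∧ Lop a b q x₀ <
      α * quadForm (a x₀) (WithLp.toLp 2 fun i => pd q i x₀) := by
    refine ⟨(|Lop a b q x₀| + 1) / quadForm (a x₀) (WithLp.toLp 2 fun i => pd q i x₀),
      by positivity, ?_⟩
    rw [div_mul_cancel₀ _ hQ.ne']
    linarith [le_abs_self (Lop a b q x₀)]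
  set h : Euc d → ℝ := fun x => Real.exp (-α * q x) with hh
  have hhC : ContDiff ℝ 2 h := (contDiff_const.mul hqC).exp
  have hLh : 0 < Lop a b h x₀ := by
    have e1 : ∀ t : ℝ, HasDerivAt (fun t => Real.exp (-α * t)) (-α * Real.exp (-α * t)) t :=
      fun t => by
        simpa [mul_comm] using ((hasDerivAt_id t).const_mul (-α)).exp
    have e2 : ∀ t : ℝ, HasDerivAt (fun t => -α * Real.exp (-α * t))
        (-α * (-α * Real.exp (-α * t))) t := fun t => (e1 t).const_mul (-α)
    rw [hh, Lop_comp a b hqC e1 e2]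
    have hE := Real.exp_pos (-α * q x₀)
    have := mul_pos (mul_pos hα hE) (sub_pos.2 hαL)
    nlinarith
  have hLh_near : ∀ᶠ x in nhds x₀, 0 < Lop a b h x :=
    ((continuous_Lop hs.continuous_diffusion hs.bHolder.continuous hhC).tendsto x₀).eventually_const_lt
      hLh
  obtain ⟨r, hr, hball⟩ := Metric.eventually_nhds_iff_ball.1 hLh_near
  have hh_le : ∀ x, h x ≤ 1 := fun x => Real.exp_le_one_iff.2 (by
    have : 0 ≤ q x := by positivity
    nlinarith)
  have hhpos : 0 < h x₀ := Real.exp_pos _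
  have hh_contact : ∀ x, h x₀ ≤ h x → x ≠ x₀ → w x < M := fun x hx hxx =>
    lt_of_le_of_ne (hM x) fun he => by
      have h1 := hq_contact x he hxx
      have h2 : -α * q x₀ ≤ -α * q x := Real.exp_le_exp.1 hx
      nlinarith
  have hT : IsCompact (sphere x₀ (r / 2) ∩ {x | h x₀ ≤ h x}) :=
    (isCompact_sphere _ _).inter_right (isClosed_le continuous_const hhC.continuous)
  obtain ⟨ε, hε, hεT⟩ : ∃ ε > 0, ∀ x ∈ sphere x₀ (r / 2), w x + ε * h x < M + ε * h x₀ := by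
    have hout : ∀ ε > 0, ∀ x, h x < h x₀ → w x + ε * h x < M + ε * h x₀ := fun ε hε x hx => by
      have := mul_lt_mul_of_pos_left hx hε
      linarith [hM x]
    rcases (sphere x₀ (r / 2) ∩ {x | h x₀ ≤ h x}).eq_empty_or_nonempty with he | hTne
    · refine ⟨1, one_pos, fun x hx => hout 1 one_pos x ?_⟩
      by_contra! hx'
      exact (he ▸ (⟨hx, hx'⟩ : x ∈ sphere x₀ (r / 2) ∩ {x | h x₀ ≤ h x}) : x ∈ (∅ : Set (Euc d)))
    · obtain ⟨m, hm, hmax⟩ := hT.exists_isMaxOn hTne hw.continuous.continuousOn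
      have hmM : w m < M := hh_contact m hm.2 (ne_of_mem_sphere hm.1 (by positivity))
      refine ⟨M - w m, sub_pos.2 hmM, fun x hx => ?_⟩
      rcases lt_or_ge (h x) (h x₀) with hlt | hge
      · exact hout _ (sub_pos.2 hmM) x hlt
      · have h1 : w x ≤ w m := hmax ⟨hx, hge⟩
        have h2 := hh_le x
        nlinarith
  have hgC : ContDiff ℝ 2 fun x => w x + ε * h x := hw.add (contDiff_const.mul hhC)
  obtain ⟨m, hm, hmax⟩ := (isCompact_closedBall x₀ (r / 2)).exists_isMaxOn
    ⟨x₀, mem_closedBall_self (by positivity)⟩ hgC.continuous.continuousOn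
  have hge : M + ε * h x₀ ≤ w m + ε * h m := by
    have := hmax (mem_closedBall_self (x := x₀) (ε := r / 2) (by positivity))
    have hx₀' : w x₀ = M := hx₀
    simpa [hx₀'] using this
  have hmball : m ∈ ball x₀ (r / 2) := by
    refine lt_of_le_of_ne (mem_closedBall.1 hm) fun he => ?_
    exact absurd (hεT m he) (not_lt.2 hge)
  have hloc : IsLocalMax (fun x => w x + ε * h x) m :=
    hmax.isLocalMax (mem_of_superset (isOpen_ball.mem_nhds hmball) ball_subset_closedBall)
  have hle := Lop_nonpos_of_isLocalMax (b := b) hgC (hs.posdef m).posSemidef hloc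
  rw [Lop_add_const_mul a b hw hhC] at hle
  have := mul_pos hε (hball m (ball_subset_ball (by linarith) hmball))
  linarith [hLw m]

/-- If `1` is a ground state of `𝓛`, then every `C²` subsolution bounded above is constant. -/
lemma IsGroundState.subsolution_const {d : ℕ} {a : Euc d → Matrix (Fin d) (Fin d) ℝ}
    {b : Euc d → Euc d} (hrec : IsGroundState a b (fun _ => 0) (fun _ => 1) Set.univ)
    (hs : StandingH a b) {w : Euc d → ℝ} (hw : ContDiff ℝ 2 w)
    (hLw : ∀ x, 0 ≤ Lop a b w x) (hbdd : BddAbove (range w)) : ∃ c, ∀ x, w x = c := by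
  set M := ⨆ x, w x with hMdef
  have hM : ∀ x, w x ≤ M := fun x => le_ciSup hbdd x
  by_cases hatt : ∃ z, w z = M
  · obtain ⟨z, hz⟩ := hatt
    exact ⟨M, hs.strong_maximum_principle hw hLw hM hz⟩
  exfalso
  have hlt : ∀ x, w x < M := fun x => lt_of_le_of_ne (hM x) fun h => hatt ⟨x, h⟩
  obtain ⟨K, hK, -, -, κ, hκ, hKκ⟩ := hrec.2.2.2 ∅ isCompact_empty (empty_subset _)
    (fun x => M + (-1) * w x) (contDiff_const.add (contDiff_const.mul hw)).contDiffOn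
    (fun x _ => by linarith [hlt x]) (fun x _ => by
      rw [Lop_add_const_mul a b contDiff_const hw, Lop_const]
      linarith [hLw x])
  have hout : ∀ x, x ∉ K → w x ≤ M - κ := fun x hx => by
    have := hKκ x ⟨mem_univ x, hx⟩
    linarith
  obtain ⟨M', hM', hwM'⟩ : ∃ M' < M, ∀ x, w x ≤ M' := by
    rcases K.eq_empty_or_nonempty with he | hne
    · exact ⟨M - κ, by linarith, fun x => hout x (he ▸ notMem_empty x)⟩
    · obtain ⟨m, -, hmax⟩ := hK.exists_isMaxOn hne hw.continuous.continuousOn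
      refine ⟨max (M - κ) (w m), max_lt (by linarith) (hlt m), fun x => ?_⟩
      by_cases hx : x ∈ K
      · exact le_max_of_le_right (hmax hx)
      · exact le_max_of_le_left (hout x hx)
  exact absurd (ciSup_le hwM') (not_le.2 hM')

/-- Corollary 2.2: if `1` is a ground state of `𝓛` (recurrence) and `V ≤ 0` is bounded,
then every bounded solution of `𝓛u + Vu = 0` is constant. -/
theorem statement6 {d : ℕ} (hd : 1 ≤ d)
    (a : Euc d → Matrix (Fin d) (Fin d) ℝ) (b : Euc d → Euc d)
    (hstand : StandingH a b)
    (hrec : IsGroundState a b (fun _ => 0) (fun _ => 1) Set.univ)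
    (V : Euc d → ℝ) (hVreg : LocallyHolder V)
    (hVbdd : ∃ C, ∀ x, |V x| ≤ C) (hVneg : ∀ x, V x ≤ 0)
    (u : Euc d → ℝ) (huC2 : ContDiff ℝ 2 u) (hubdd : ∃ C, ∀ x, |u x| ≤ C)
    (hsol : ∀ x, Lop a b u x + V x * u x = 0) :
    ∃ c : ℝ, ∀ x, u x = c := by
  obtain ⟨C, hC⟩ := hubdd
  have hLsq : ∀ x, Lop a b (fun y => u y ^ 2) x =
      2 * quadForm (a x) (WithLp.toLp 2 fun i => pd u i x) + -V x * (2 * u x ^ 2) := fun x => by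
    have e1 : ∀ t : ℝ, HasDerivAt (fun t => t ^ 2) (2 * t) t := fun t => by
      simpa using hasDerivAt_pow 2 t
    have e2 : ∀ t : ℝ, HasDerivAt (fun t => 2 * t) 2 t := fun t => by
      simpa using (hasDerivAt_id t).const_mul 2
    rw [Lop_comp a b huC2 e1 e2]
    linear_combination 2 * u x * hsol x
  have hQ : ∀ x ξ, 0 ≤ quadForm (a x) ξ := fun x ξ => by
    by_cases hξ : ξ = 0
    · simp [hξ, quadForm]
    · exact (hstand.quadForm_pos x hξ).le
  have hpot : ∀ x, 0 ≤ -V x * (2 * u x ^ 2) := fun x =>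
    mul_nonneg (by linarith [hVneg x]) (by positivity)
  obtain ⟨c, hc⟩ := hrec.subsolution_const hstand (huC2.pow 2)
    (fun x => by
      rw [hLsq]
      linarith [hQ x (WithLp.toLp 2 fun i => pd u i x), hpot x])
    ⟨C ^ 2, by
      rintro _ ⟨x, rfl⟩
      exact sq_le_sq' (neg_le_of_abs_le (hC x)) (le_of_abs_le (hC x))⟩
  have hfd : ∀ x, fderiv ℝ u x = 0 := fun x => by
    refine fderiv_eq_zero_of_pd_eq_zero fun i => ?_
    by_contra hi
    have hpos := hstand.quadForm_pos x (ξ := WithLp.toLp 2 fun i => pd u i x) fun h0 =>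
      hi (by simpa using congrArg (fun v : Euc d => v i) h0)
    have h1 := hLsq x
    rw [show (fun y => u y ^ 2) = fun _ => c from funext hc, Lop_const] at h1
    linarith [hpot x]
  exact ⟨u 0, fun x => is_const_of_fderiv_eq_zero (huC2.differentiable (by norm_num)) hfd x 0⟩
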